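/- Let 0 < a < b and x ∈ ℝ⁴ be such that B̄_x(b) ⊆ Ω and H_φ(x,t) > 0 for all t ∈ (a,b). Then for every r ∈ (a,b), the function t ↦ N_φ(x,t) is differentiable at r with ∂_r N_φ(x,r) = (2/(r·H_φ(x,r))) ∫ −φ'(|y−x|/r) |y−x|⁻¹ |∂_{η_x}u(y) − N_φ(x,r)·u(y)|² dy ≥ 0. In particular, N_φ(x,·) is nondecreasing on (a,b). -/

import Mathlib

open Metric MeasureTheory
open scoped RealInnerProductSpace

noncomputable section

abbrev E4 := EuclideanSpace ℝ (Fin 4)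

variable {E : Type*} [NormedAddCommGroup E] [InnerProductSpace ℝ E] [FiniteDimensional ℝ E]

/-- `u` is smooth and harmonic (the Laplacian, i.e. the sum of the pure second
derivatives in the coordinate directions, vanishes) on `Ω`. -/
def IsHarmonicOn (u : E4 → E) (Ω : Set E4) : Prop :=
  ContDiffOn ℝ (⊤ : ℕ∞) u Ω ∧
  ∀ x ∈ Ω, ∑ i : Fin 4,
    iteratedFDeriv ℝ 2 u x ![EuclideanSpace.single i (1:ℝ), EuclideanSpace.single i 1] = 0

/-- `|∇u(y)|²`, the squared Frobenius norm of the derivative of `u` at `y`. -/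
def gradSq (u : E4 → E) (y : E4) : ℝ :=
  ∑ i : Fin 4, ‖fderiv ℝ u y (EuclideanSpace.single i (1:ℝ))‖ ^ 2

/-- `D_φ(x,r) = ∫ |∇u(y)|² φ(|y−x|/r) dy`. -/
def Dphi (φ : ℝ → ℝ) (u : E4 → E) (x : E4) (r : ℝ) : ℝ :=
  ∫ y, gradSq u y * φ (‖y - x‖ / r)

/-- `H_φ(x,r) = −∫ |u(y)|² |y−x|⁻¹ φ'(|y−x|/r) dy`. -/
def Hphi (φ : ℝ → ℝ) (u : E4 → E) (x : E4) (r : ℝ) : ℝ :=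
  -∫ y, ‖u y‖ ^ 2 * ‖y - x‖⁻¹ * deriv φ (‖y - x‖ / r)

/-- `E_φ(x,r) = −∫ |∂_{ν_x}u(y)|² |y−x| φ'(|y−x|/r) dy`, where `ν_x(y) = (y−x)/|y−x|`. -/
def Ephi (φ : ℝ → ℝ) (u : E4 → E) (x : E4) (r : ℝ) : ℝ :=
  -∫ y, ‖fderiv ℝ u y (‖y - x‖⁻¹ • (y - x))‖ ^ 2 * ‖y - x‖ * deriv φ (‖y - x‖ / r)

/-- The smoothed frequency `N_φ(x,r) = r D_φ(x,r) / H_φ(x,r)`. -/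
def Nphi (φ : ℝ → ℝ) (u : E4 → E) (x : E4) (r : ℝ) : ℝ :=
  r * Dphi φ u x r / Hphi φ u x r

/-!
Write `η(y) = y - x` and let `S f` be the shell integral `-∫ f |y - x|⁻¹ φ'(|y - x| / r) dy`.
Rescaling to the unit ball turns `r`-derivatives of radially weighted integrals into integrals of
`∂_η` of the integrand. Green's identity for the harmonic function `u`, tested against `u` and
against `∂_η u`, then gives, in dimension `n`,
* `r D = S ⟨u, ∂_η u⟩`,
* `H' = (n - 1) / r * H + 2 D`,
* `D' = (n - 2) / r * D + 2 / r ^ 2 * S |∂_η u| ^ 2`.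
The dimensional terms cancel in `N' = (r D / H)'`, and what is left is
`2 / (r H) * (S |∂_η u| ^ 2 - 2 N S ⟨u, ∂_η u⟩ + N ^ 2 S |u| ^ 2)`, a perfect square under `S`.
-/

open Filter InnerProductSpace Laplacian Module Topology

theorem hasDerivAt_setIntegral_of_isCompact {X G : Type*} [TopologicalSpace X] [T2Space X]
    [MeasurableSpace X] [OpensMeasurableSpace X] {μ : Measure X} [IsFiniteMeasureOnCompacts μ]
    [NormedAddCommGroup G] [NormedSpace ℝ G] {F F' : ℝ → X → G} {I : Set ℝ} {K : Set X} {r : ℝ}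
    (hI : IsCompact I) (hIr : I ∈ 𝓝 r) (hK : IsCompact K)
    (hF : ContinuousOn F.uncurry (I ×ˢ K)) (hF' : ContinuousOn F'.uncurry (I ×ˢ K))
    (hderiv : ∀ t ∈ I, ∀ z ∈ K, HasDerivAt (F · z) (F' t z) t) :
    HasDerivAt (fun t => ∫ z in K, F t z ∂μ) (∫ z in K, F' r z ∂μ) r := by
  obtain ⟨C, hC⟩ := (hI.prod hK).exists_bound_of_continuousOn hF'
  have hintegrable {f : ℝ → X → G} (hf : ContinuousOn f.uncurry (I ×ˢ K)) {t : ℝ} (ht : t ∈ I) :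
      IntegrableOn (f t) K μ :=
    ContinuousOn.integrableOn_compact hK
      (hf.comp (f := fun z => (t, z)) (by fun_prop) fun _ hz => ⟨ht, hz⟩)
  have hr : r ∈ I := mem_of_mem_nhds hIr
  refine (hasDerivAt_integral_of_dominated_loc_of_deriv_le (bound := fun _ => C) hIr
    ?_ (hintegrable hF hr) (hintegrable hF' hr).aestronglyMeasurable ?_
    (continuousOn_const.integrableOn_compact hK) ?_).2
  · filter_upwards [hIr] with t ht using (hintegrable hF ht).aestronglyMeasurable
  · filter_upwards [ae_restrict_mem hK.measurableSet] with z hz t ht using hC (t, z) ⟨ht, hz⟩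
  · filter_upwards [ae_restrict_mem hK.measurableSet] with z hz t ht using hderiv t ht z hz

lemma add_smul_mem_ball {V : Type*} [SeminormedAddCommGroup V] [NormedSpace ℝ V] {x z : V}
    {t R : ℝ} (ht : 0 ≤ t) (htR : t < R) (hz : ‖z‖ ≤ 1) : x + t • z ∈ ball x R := by
  rw [mem_ball_iff_norm, add_sub_cancel_left, norm_smul, Real.norm_of_nonneg ht]
  exact (mul_le_of_le_one_right ht hz).trans_lt htR

section RadialIntegral

variable {V : Type*} [NormedAddCommGroup V]

/-- `∂_{η_x} u`, the derivative of `u` along the field `η_x(y) = y - x`. -/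
def radialDeriv {F : Type*} [NormedSpace ℝ V] [NormedAddCommGroup F] [NormedSpace ℝ F]
    (u : V → F) (x y : V) : F :=
  fderiv ℝ u y (y - x)

/-- A continuous radial profile whose weight at scale `r` is supported in the ball of radius `r`. -/
structure IsRadialWeight (ψ : ℝ → ℝ) : Prop where
  continuous : Continuous ψ
  eq_zero_of_one_le : ∀ t, 1 ≤ t → ψ t = 0

lemma IsRadialWeight.eq_zero_of_notMem_ball {ψ : ℝ → ℝ} (hψ : IsRadialWeight ψ) {x y : V} {r : ℝ}
    (hr : 0 < r) (hy : y ∉ ball x r) : ψ (‖y - x‖ / r) = 0 := by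
  rw [mem_ball_iff_norm, not_lt] at hy
  exact hψ.eq_zero_of_one_le _ ((one_le_div hr).2 hy)

lemma IsRadialWeight.tsupport_subset {ψ : ℝ → ℝ} (hψ : IsRadialWeight ψ) {x : V} {r : ℝ}
    (hr : 0 < r) : tsupport (fun y => ψ (‖y - x‖ / r)) ⊆ closedBall x r := by
  refine closure_minimal (Function.support_subset_iff'.2 fun y hy => ?_) isClosed_closedBall
  exact hψ.eq_zero_of_notMem_ball hr (Set.notMem_subset ball_subset_closedBall hy)

variable [MeasurableSpace V]

/-- The integral of `f` against the radial weight of profile `ψ`, centred at `x`, at scale `r`. -/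
def radialIntegral (μ : Measure V) (ψ : ℝ → ℝ) (f : V → ℝ) (x : V) (r : ℝ) : ℝ :=
  ∫ y, f y * ψ (‖y - x‖ / r) ∂μ

variable {μ : Measure V} {ψ : ℝ → ℝ} {f g : V → ℝ} {x : V} {r R : ℝ}

lemma radialIntegral_congr (hψ : IsRadialWeight ψ) (hr : 0 < r) (hfg : Set.EqOn f g (ball x r)) :
    radialIntegral μ ψ f x r = radialIntegral μ ψ g x r := by
  refine integral_congr_ae (.of_forall fun y => ?_)
  by_cases hy : y ∈ ball x r
  · simp only [hfg hy]
  · simp only [hψ.eq_zero_of_notMem_ball hr hy, mul_zero]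

lemma radialIntegral_const_mul (c : ℝ) :
    radialIntegral μ ψ (fun y => c * f y) x r = c * radialIntegral μ ψ f x r := by
  simp only [radialIntegral, mul_assoc, integral_const_mul]

variable [NormedSpace ℝ V] [FiniteDimensional ℝ V] [BorelSpace V]

lemma IsRadialWeight.integrable [IsFiniteMeasureOnCompacts μ] (hψ : IsRadialWeight ψ) (hr : 0 < r)
    (hf : ContinuousOn f (closedBall x r)) :
    Integrable (fun y => f y * ψ (‖y - x‖ / r)) μ := by
  have : ProperSpace V := FiniteDimensional.proper_real V
  have hψc : Continuous fun y : V => ψ (‖y - x‖ / r) := hψ.continuous.comp (by fun_prop)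
  have hint := (hf.mul hψc.continuousOn).integrableOn_compact (μ := μ) (isCompact_closedBall x r)
  refine hint.integrable_of_forall_notMem_eq_zero fun y hy => ?_
  simp only [Pi.mul_apply,
    hψ.eq_zero_of_notMem_ball hr (Set.notMem_subset ball_subset_closedBall hy), mul_zero]

lemma radialIntegral_add [IsFiniteMeasureOnCompacts μ] (hψ : IsRadialWeight ψ) (hr : 0 < r)
    (hf : ContinuousOn f (closedBall x r)) (hg : ContinuousOn g (closedBall x r)) :
    radialIntegral μ ψ (fun y => f y + g y) x r =
      radialIntegral μ ψ f x r + radialIntegral μ ψ g x r := by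
  simp only [radialIntegral, add_mul]
  exact integral_add (hψ.integrable hr hf) (hψ.integrable hr hg)

lemma radialIntegral_sum [IsFiniteMeasureOnCompacts μ] {ι : Type*} (s : Finset ι) {f : ι → V → ℝ}
    (hψ : IsRadialWeight ψ) (hr : 0 < r) (hf : ∀ i ∈ s, ContinuousOn (f i) (closedBall x r)) :
    radialIntegral μ ψ (fun y => ∑ i ∈ s, f i y) x r = ∑ i ∈ s, radialIntegral μ ψ (f i) x r := by
  simp only [radialIntegral, Finset.sum_mul]
  exact integral_finsetSum s fun i hi => hψ.integrable hr (hf i hi)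

variable [μ.IsAddHaarMeasure]

lemma radialIntegral_eq_pow_mul_integral (μ : Measure V) [μ.IsAddHaarMeasure] (ψ : ℝ → ℝ)
    (f : V → ℝ) (x : V) (hr : 0 < r) :
    radialIntegral μ ψ f x r = r ^ finrank ℝ V * ∫ z, f (x + r • z) * ψ ‖z‖ ∂μ := by
  have htranslate : radialIntegral μ ψ f x r = ∫ y, f (x + y) * ψ (‖y‖ / r) ∂μ := by
    rw [radialIntegral, ← integral_add_left_eq_self _ x]
    simp only [add_sub_cancel_left]
  have hdilate := μ.integral_comp_smul (fun y => f (x + y) * ψ (‖y‖ / r)) r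
  have hnorm (z : V) : ‖r • z‖ / r = ‖z‖ := by
    rw [norm_smul, Real.norm_of_nonneg hr.le, mul_div_cancel_left₀ _ hr.ne']
  simp only [hnorm, smul_eq_mul, abs_of_pos (inv_pos.2 (pow_pos hr _))] at hdilate
  rw [htranslate, hdilate, mul_inv_cancel_left₀ (pow_pos hr _).ne']

lemma hasDerivAt_integral_comp_add_smul (hψ : IsRadialWeight ψ) (hr : 0 < r) (hrR : r < R)
    (hf : ContDiffOn ℝ 1 f (ball x R)) :
    HasDerivAt (fun t => ∫ z, f (x + t • z) * ψ ‖z‖ ∂μ)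
      (∫ z, fderiv ℝ f (x + r • z) z * ψ ‖z‖ ∂μ) r := by
  have : ProperSpace V := FiniteDimensional.proper_real V
  set K : Set V := closedBall 0 1
  obtain ⟨ε, hε, hεr, hεR⟩ : ∃ ε > 0, ε < r ∧ r + ε < R :=
    ⟨min (r / 2) ((R - r) / 2), by simp [hr, hrR], by linarith [min_le_left (r / 2) ((R - r) / 2)],
      by linarith [min_le_right (r / 2) ((R - r) / 2)]⟩
  have hmaps : Set.MapsTo (fun p : ℝ × V => x + p.1 • p.2) (closedBall r ε ×ˢ K) (ball x R) := by
    rintro ⟨t, z⟩ ⟨ht, hz⟩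
    simp only [Real.closedBall_eq_Icc, Set.mem_Icc] at ht
    exact add_smul_mem_ball (by linarith) (by linarith) (mem_closedBall_zero_iff.1 hz)
  have hψn : Continuous fun p : ℝ × V => ψ ‖p.2‖ := hψ.continuous.comp (by fun_prop)
  have hF : ContinuousOn (fun p : ℝ × V => f (x + p.1 • p.2) * ψ ‖p.2‖) (closedBall r ε ×ˢ K) :=
    (hf.continuousOn.comp (by fun_prop) hmaps).mul hψn.continuousOn
  have hF' : ContinuousOn (fun p : ℝ × V => fderiv ℝ f (x + p.1 • p.2) p.2 * ψ ‖p.2‖)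
      (closedBall r ε ×ˢ K) :=
    (((hf.continuousOn_fderiv_of_isOpen isOpen_ball le_rfl).comp (by fun_prop) hmaps).clm_apply
      (by fun_prop)).mul hψn.continuousOn
  have hset (g : V → ℝ) : ∫ z in K, g z * ψ ‖z‖ ∂μ = ∫ z, g z * ψ ‖z‖ ∂μ := by
    refine setIntegral_eq_integral_of_forall_compl_eq_zero fun z hz => ?_
    rw [mem_closedBall_zero_iff, not_le] at hz
    rw [hψ.eq_zero_of_one_le _ hz.le, mul_zero]
  simp_rw [← hset]
  refine hasDerivAt_setIntegral_of_isCompact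
    (F' := fun t z => fderiv ℝ f (x + t • z) z * ψ ‖z‖) (isCompact_closedBall r ε)
    (closedBall_mem_nhds r hε) (isCompact_closedBall 0 1) hF hF' fun t ht z hz => ?_
  have hline : HasDerivAt (fun t : ℝ => x + t • z) z t := by
    simpa using ((hasDerivAt_id t).smul_const z).const_add x
  have hdiff : DifferentiableAt ℝ f (x + t • z) :=
    (hf.differentiableOn one_ne_zero).differentiableAt
      (isOpen_ball.mem_nhds (hmaps (x := (t, z)) ⟨ht, hz⟩))
  exact (hdiff.hasFDerivAt.comp_hasDerivAt t hline).mul_const _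

theorem hasDerivAt_radialIntegral (hψ : IsRadialWeight ψ) (hr : 0 < r) (hrR : r < R)
    (hf : ContDiffOn ℝ 1 f (ball x R)) :
    HasDerivAt (radialIntegral μ ψ f x)
      (r⁻¹ * (finrank ℝ V * radialIntegral μ ψ f x r +
        radialIntegral μ ψ (radialDeriv f x) x r)) r := by
  have hrescaled : radialIntegral μ ψ f x =ᶠ[𝓝 r]
      fun t => t ^ finrank ℝ V * ∫ z, f (x + t • z) * ψ ‖z‖ ∂μ := by
    filter_upwards [lt_mem_nhds hr] with t ht
    exact radialIntegral_eq_pow_mul_integral μ ψ f x ht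
  have hderiv := (hasDerivAt_pow (finrank ℝ V) r).mul
    (hasDerivAt_integral_comp_add_smul (μ := μ) hψ hr hrR hf)
  refine (hderiv.congr_of_eventuallyEq hrescaled).congr_deriv ?_
  have hpow : (finrank ℝ V : ℝ) * r ^ (finrank ℝ V - 1) =
      r⁻¹ * (finrank ℝ V * r ^ finrank ℝ V) := by
    cases finrank ℝ V with
    | zero => simp
    | succ n => rw [Nat.add_sub_cancel, pow_succ]; field_simp
  rw [hpow, radialIntegral_eq_pow_mul_integral μ ψ f x hr,
    radialIntegral_eq_pow_mul_integral μ ψ (radialDeriv f x) x hr]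
  simp only [radialDeriv, add_sub_cancel_left, map_smul, smul_eq_mul, mul_assoc, integral_const_mul]
  field_simp

end RadialIntegral

section ShellIntegral

variable {V : Type*} [NormedAddCommGroup V] {φ : ℝ → ℝ} {x : V} {r R : ℝ}

/-- A `C¹` radial cutoff vanishing from `1` on. It is constant near `0`, so that
`y ↦ φ (‖y - x‖ / r)` is differentiable at `x` too. -/
structure IsRadialCutoff (φ : ℝ → ℝ) : Prop where
  contDiff : ContDiff ℝ 1 φ
  eventually_eq : ∀ᶠ t in 𝓝 0, φ t = φ 0
  eq_zero_of_one_le : ∀ t, 1 ≤ t → φ t = 0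

/-- The profile `φ'(t) / t`, for which `|y - x|⁻¹ φ'(|y - x| / r)` is `r⁻¹` times the weight at
scale `r`. -/
def shellWeight (φ : ℝ → ℝ) (t : ℝ) : ℝ :=
  deriv φ t * t⁻¹

namespace IsRadialCutoff

lemma isRadialWeight (hφ : IsRadialCutoff φ) : IsRadialWeight φ :=
  ⟨hφ.contDiff.continuous, hφ.eq_zero_of_one_le⟩

lemma deriv_eventuallyEq_zero (hφ : IsRadialCutoff φ) : deriv φ =ᶠ[𝓝 0] 0 := by
  have hconst : φ =ᶠ[𝓝 0] fun _ => φ 0 := hφ.eventually_eq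
  exact hconst.deriv.trans (.of_eq (deriv_const' _))

lemma deriv_eq_zero_of_one_le (hφ : IsRadialCutoff φ) {t : ℝ} (ht : 1 ≤ t) : deriv φ t = 0 := by
  have hdiff : DifferentiableAt ℝ φ t := hφ.contDiff.differentiable one_ne_zero t
  calc deriv φ t = derivWithin φ (Set.Ici 1) t :=
        (hdiff.derivWithin (uniqueDiffOn_Ici 1 t ht)).symm
    _ = derivWithin (fun _ => 0) (Set.Ici 1) t :=
        derivWithin_congr hφ.eq_zero_of_one_le (hφ.eq_zero_of_one_le t ht)
    _ = 0 := congrFun (derivWithin_const ..) t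

lemma isRadialWeight_shellWeight (hφ : IsRadialCutoff φ) : IsRadialWeight (shellWeight φ) where
  continuous := continuous_iff_continuousAt.2 fun t => by
    obtain rfl | ht := eq_or_ne t 0
    · refine (continuousAt_const (y := 0)).congr ?_
      filter_upwards [hφ.deriv_eventuallyEq_zero] with s hs
      rw [shellWeight, hs, Pi.zero_apply, zero_mul]
    · exact (hφ.contDiff.continuous_deriv le_rfl).continuousAt.mul (continuousAt_inv₀ ht)
  eq_zero_of_one_le t ht := by rw [shellWeight, hφ.deriv_eq_zero_of_one_le ht, zero_mul]

end IsRadialCutoff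

variable [MeasurableSpace V]

/-- The smoothed sphere integral `-∫ f(y) |y - x|⁻¹ φ'(|y - x| / r) dy`. -/
def shellIntegral (μ : Measure V) (φ : ℝ → ℝ) (f : V → ℝ) (x : V) (r : ℝ) : ℝ :=
  -∫ y, f y * ‖y - x‖⁻¹ * deriv φ (‖y - x‖ / r) ∂μ

variable {μ : Measure V} {f g : V → ℝ}

lemma shellIntegral_eq_radialIntegral (μ : Measure V) (φ : ℝ → ℝ) (f : V → ℝ) (x : V)
    (hr : r ≠ 0) :
    shellIntegral μ φ f x r = -(r⁻¹ * radialIntegral μ (shellWeight φ) f x r) := by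
  rw [shellIntegral, radialIntegral, ← integral_const_mul]
  congr 2 with y
  rw [shellWeight, inv_div]
  field_simp

lemma shellIntegral_eq_integral_neg (μ : Measure V) (φ : ℝ → ℝ) (f : V → ℝ) (x : V) (r : ℝ) :
    shellIntegral μ φ f x r = ∫ y, -(deriv φ (‖y - x‖ / r)) * ‖y - x‖⁻¹ * f y ∂μ := by
  rw [shellIntegral, ← integral_neg]
  congr 1 with y
  ring

lemma shellIntegral_nonneg (hφ : Antitone φ) (hf : 0 ≤ f) : 0 ≤ shellIntegral μ φ f x r := by
  rw [shellIntegral_eq_integral_neg]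
  refine integral_nonneg fun y => mul_nonneg (mul_nonneg ?_ (by positivity)) (hf y)
  exact neg_nonneg.2 hφ.deriv_nonpos

lemma shellIntegral_congr (hφ : IsRadialCutoff φ) (hr : 0 < r) (hfg : Set.EqOn f g (ball x r)) :
    shellIntegral μ φ f x r = shellIntegral μ φ g x r := by
  simp only [shellIntegral_eq_radialIntegral μ φ _ x hr.ne',
    radialIntegral_congr hφ.isRadialWeight_shellWeight hr hfg]

lemma shellIntegral_const_mul (c : ℝ) :
    shellIntegral μ φ (fun y => c * f y) x r = c * shellIntegral μ φ f x r := by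
  simp only [shellIntegral, mul_assoc, integral_const_mul, mul_neg]

variable [NormedSpace ℝ V] [FiniteDimensional ℝ V] [BorelSpace V]

lemma shellIntegral_add [IsFiniteMeasureOnCompacts μ] (hφ : IsRadialCutoff φ) (hr : 0 < r)
    (hf : ContinuousOn f (closedBall x r)) (hg : ContinuousOn g (closedBall x r)) :
    shellIntegral μ φ (fun y => f y + g y) x r =
      shellIntegral μ φ f x r + shellIntegral μ φ g x r := by
  simp only [shellIntegral_eq_radialIntegral μ φ _ x hr.ne',
    radialIntegral_add hφ.isRadialWeight_shellWeight hr hf hg]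
  ring

lemma shellIntegral_sum [IsFiniteMeasureOnCompacts μ] {ι : Type*} (s : Finset ι) {f : ι → V → ℝ}
    (hφ : IsRadialCutoff φ) (hr : 0 < r) (hf : ∀ i ∈ s, ContinuousOn (f i) (closedBall x r)) :
    shellIntegral μ φ (fun y => ∑ i ∈ s, f i y) x r = ∑ i ∈ s, shellIntegral μ φ (f i) x r := by
  simp only [shellIntegral_eq_radialIntegral μ φ _ x hr.ne',
    radialIntegral_sum s hφ.isRadialWeight_shellWeight hr hf, Finset.mul_sum,
    Finset.sum_neg_distrib]

theorem hasDerivAt_shellIntegral [μ.IsAddHaarMeasure] (hφ : IsRadialCutoff φ) (hr : 0 < r)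
    (hrR : r < R) (hf : ContDiffOn ℝ 1 f (ball x R)) :
    HasDerivAt (shellIntegral μ φ f x)
      (r⁻¹ * ((finrank ℝ V - 1) * shellIntegral μ φ f x r +
        shellIntegral μ φ (radialDeriv f x) x r)) r := by
  have hweighted : shellIntegral μ φ f x =ᶠ[𝓝 r]
      fun t => -(t⁻¹ * radialIntegral μ (shellWeight φ) f x t) := by
    filter_upwards [lt_mem_nhds hr] with t ht
    exact shellIntegral_eq_radialIntegral μ φ f x ht.ne'
  have hderiv := ((hasDerivAt_inv hr.ne').mul
    (hasDerivAt_radialIntegral (μ := μ) hφ.isRadialWeight_shellWeight hr hrR hf)).neg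
  refine (hderiv.congr_of_eventuallyEq hweighted).congr_deriv ?_
  simp only [shellIntegral_eq_radialIntegral μ φ _ x hr.ne']
  field_simp
  ring

end ShellIntegral

section IntegrationByParts

variable {V : Type*} [NormedAddCommGroup V] [InnerProductSpace ℝ V] {φ : ℝ → ℝ} {x : V} {r R : ℝ}

lemma hasFDerivAt_norm {z : V} (hz : z ≠ 0) :
    HasFDerivAt (fun z : V => ‖z‖) (‖z‖⁻¹ • innerSL ℝ z) z := by
  have hsqrt := (hasFDerivAt_id z).norm_sq.sqrt (pow_ne_zero 2 (norm_ne_zero_iff.2 hz))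
  simp only [id, Real.sqrt_sq (norm_nonneg _)] at hsqrt
  refine hsqrt.congr_fderiv ?_
  ext v
  simp only [ContinuousLinearMap.comp_id, smul_apply, nsmul_eq_mul, smul_eq_mul, Nat.cast_ofNat]
  field_simp

lemma IsRadialCutoff.hasFDerivAt (hφ : IsRadialCutoff φ) (x y : V) (r : ℝ) :
    HasFDerivAt (fun y => φ (‖y - x‖ / r))
      ((r⁻¹ * (‖y - x‖⁻¹ * deriv φ (‖y - x‖ / r))) • innerSL ℝ (y - x)) y := by
  obtain rfl | hy := eq_or_ne y x
  · simp only [sub_self, map_zero, smul_zero]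
    have htendsto : Tendsto (fun z => ‖z - y‖ / r) (𝓝 y) (𝓝 0) := by
      simpa using (by fun_prop : Continuous fun z => ‖z - y‖ / r).tendsto y
    exact (hasFDerivAt_const (φ 0) y).congr_of_eventuallyEq (htendsto.eventually hφ.eventually_eq)
  · have hnorm : HasFDerivAt (fun y => ‖y - x‖ / r) (r⁻¹ • ‖y - x‖⁻¹ • innerSL ℝ (y - x)) y :=
      ((hasFDerivAt_norm (sub_ne_zero.2 hy)).comp y ((hasFDerivAt_id y).sub_const x)).mul_const r⁻¹
    have hφy := (hφ.contDiff.differentiable one_ne_zero (‖y - x‖ / r)).hasDerivAt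
    refine (hφy.comp_hasFDerivAt y hnorm).congr_fderiv ?_
    rw [smul_smul, smul_smul]
    congr 1
    ring

lemma IsRadialCutoff.fderiv_apply (hφ : IsRadialCutoff φ) (x y e : V) (r : ℝ) :
    fderiv ℝ (fun y => φ (‖y - x‖ / r)) y e =
      r⁻¹ * (⟪y - x, e⟫ * ‖y - x‖⁻¹ * deriv φ (‖y - x‖ / r)) := by
  rw [(hφ.hasFDerivAt x y r).fderiv, smul_apply, smul_eq_mul, innerSL_apply_apply]
  ring

lemma IsRadialCutoff.fderiv_apply_eq_shellWeight (hφ : IsRadialCutoff φ) (x y e : V) (hr : r ≠ 0) :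
    fderiv ℝ (fun y => φ (‖y - x‖ / r)) y e =
      r⁻¹ ^ 2 * (⟪y - x, e⟫ * shellWeight φ (‖y - x‖ / r)) := by
  rw [hφ.fderiv_apply, shellWeight, inv_div]
  field_simp

variable [FiniteDimensional ℝ V] [MeasurableSpace V] [BorelSpace V] {μ : Measure V}
  [μ.IsAddHaarMeasure]

theorem radialIntegral_fderiv_apply (hφ : IsRadialCutoff φ) (hr : 0 < r) (hrR : r < R) {g : V → ℝ}
    (hg : ContDiffOn ℝ 1 g (ball x R)) (e : V) :
    radialIntegral μ φ (fun y => fderiv ℝ g y e) x r =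
      r⁻¹ * shellIntegral μ φ (fun y => g y * ⟪y - x, e⟫) x r := by
  have hsub : closedBall x r ⊆ ball x R := closedBall_subset_ball hrR
  have hgc : ContinuousOn g (closedBall x r) := hg.continuousOn.mono hsub
  have hg'c : ContinuousOn (fun y => fderiv ℝ g y e) (closedBall x r) :=
    ((hg.continuousOn_fderiv_of_isOpen isOpen_ball le_rfl).mono hsub).clm_apply (by fun_prop)
  have hint : Integrable (fun y => g y * fderiv ℝ (fun y => φ (‖y - x‖ / r)) y e) μ := by
    have hweight (y : V) : g y * fderiv ℝ (fun y => φ (‖y - x‖ / r)) y e =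
        r⁻¹ ^ 2 * (g y * ⟪y - x, e⟫ * shellWeight φ (‖y - x‖ / r)) := by
      rw [hφ.fderiv_apply_eq_shellWeight _ _ _ hr.ne']
      ring
    simp only [hweight]
    exact (hφ.isRadialWeight_shellWeight.integrable hr (by fun_prop)).const_mul _
  have hparts := integral_mul_fderiv_eq_neg_fderiv_mul_of_integrable
    (hφ.isRadialWeight.integrable hr hg'c) hint (hφ.isRadialWeight.integrable hr hgc)
    (fun y hy => (hg.differentiableOn one_ne_zero).differentiableAt
      (isOpen_ball.mem_nhds (hsub (hφ.isRadialWeight.tsupport_subset hr hy))))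
    (fun y _ => (hφ.hasFDerivAt x y r).differentiableAt)
  have hshell (y : V) : g y * fderiv ℝ (fun y => φ (‖y - x‖ / r)) y e =
      r⁻¹ * (g y * ⟪y - x, e⟫ * ‖y - x‖⁻¹ * deriv φ (‖y - x‖ / r)) := by
    rw [hφ.fderiv_apply]
    ring
  simp only [hshell, integral_const_mul] at hparts
  rw [radialIntegral, shellIntegral, mul_neg, hparts, neg_neg]

end IntegrationByParts

section Green

variable {V F : Type*} [NormedAddCommGroup V] [InnerProductSpace ℝ V] [NormedAddCommGroup F]
  [InnerProductSpace ℝ F] {φ : ℝ → ℝ} {u v w : V → F} {x y : V} {r R : ℝ}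

lemma hasFDerivAt_fderiv_apply (hv : ContDiffAt ℝ 2 v y) (e : V) :
    HasFDerivAt (fun y => fderiv ℝ v y e) ((fderiv ℝ (fderiv ℝ v) y).flip e) y := by
  have hv' : HasFDerivAt (fderiv ℝ v) (fderiv ℝ (fderiv ℝ v) y) y :=
    ((hv.fderiv_right (m := 1) le_rfl).differentiableAt one_ne_zero).hasFDerivAt
  simpa using hv'.clm_apply (hasFDerivAt_const e y)

lemma radialDeriv_norm_sq (hu : DifferentiableAt ℝ u y) :
    radialDeriv (fun y => ‖u y‖ ^ 2) x y = 2 * ⟪u y, radialDeriv u x y⟫ := by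
  rw [radialDeriv, hu.hasFDerivAt.norm_sq.fderiv]
  simp [radialDeriv, two_mul]

lemma fderiv_radialDeriv_apply (hu : ContDiffAt ℝ 2 u y) (e : V) :
    fderiv ℝ (radialDeriv u x) y e = fderiv ℝ u y e + fderiv ℝ (fderiv ℝ u) y (y - x) e := by
  have hu' : HasFDerivAt (fderiv ℝ u) (fderiv ℝ (fderiv ℝ u) y) y :=
    ((hu.fderiv_right (m := 1) le_rfl).differentiableAt one_ne_zero).hasFDerivAt
  have hderiv : HasFDerivAt (radialDeriv u x) _ y :=
    hu'.clm_apply ((hasFDerivAt_id y).sub_const x)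
  have hsymm : IsSymmSndFDerivAt ℝ u y := hu.isSymmSndFDerivAt (by simp)
  rw [hderiv.fderiv, hsymm.eq (y - x) e]
  simp

lemma contDiffOn_radialDeriv {s : Set V} (hs : IsOpen s) (hu : ContDiffOn ℝ 2 u s) :
    ContDiffOn ℝ 1 (radialDeriv u x) s :=
  (hu.fderiv_of_isOpen hs le_rfl).clm_apply (by fun_prop)

variable [FiniteDimensional ℝ V]

/-- The Frobenius inner product of `Dw(y)` and `Dv(y)`, so that `|∇u|²` is `gradInner u u`. -/
def gradInner (w v : V → F) (y : V) : ℝ :=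
  ∑ i, ⟪fderiv ℝ w y (stdOrthonormalBasis ℝ V i), fderiv ℝ v y (stdOrthonormalBasis ℝ V i)⟫

lemma gradInner_eq_sum_orthonormalBasis {ι : Type*} [Fintype ι] (b : OrthonormalBasis ι ℝ V)
    (w v : V → F) (y : V) :
    gradInner w v y = ∑ i, ⟪fderiv ℝ w y (b i), fderiv ℝ v y (b i)⟫ := by
  let B := TensorProduct.lift ((innerₗ F).compl₁₂ (fderiv ℝ w y).toLinearMap
    (fderiv ℝ v y).toLinearMap)
  calc gradInner w v y = B (canonicalCovariantTensor V) := by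
        rw [canonicalCovariantTensor_eq_sum V (stdOrthonormalBasis ℝ V)]
        simp [B, gradInner]
    _ = ∑ i, ⟪fderiv ℝ w y (b i), fderiv ℝ v y (b i)⟫ := by
        rw [canonicalCovariantTensor_eq_sum V b]
        simp [B]

lemma laplacian_eq_sum_fderiv_fderiv (v : V → F) (y : V) :
    Δ v y = ∑ i, fderiv ℝ (fderiv ℝ v) y (stdOrthonormalBasis ℝ V i)
      (stdOrthonormalBasis ℝ V i) := by
  simp [laplacian_eq_iteratedFDeriv_stdOrthonormalBasis, iteratedFDeriv_two_apply]

lemma sum_fderiv_inner_fderiv (hw : DifferentiableAt ℝ w y) (hv : ContDiffAt ℝ 2 v y) :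
    ∑ i, fderiv ℝ (fun y => ⟪w y, fderiv ℝ v y (stdOrthonormalBasis ℝ V i)⟫) y
        (stdOrthonormalBasis ℝ V i) =
      gradInner w v y + ⟪w y, Δ v y⟫ := by
  rw [laplacian_eq_sum_fderiv_fderiv, inner_sum, gradInner, ← Finset.sum_add_distrib]
  refine Finset.sum_congr rfl fun i _ => ?_
  rw [(hw.hasFDerivAt.inner ℝ (hasFDerivAt_fderiv_apply hv _)).fderiv]
  simp [add_comm]

lemma sum_inner_fderiv_mul_inner (w v : V → F) (x y : V) :
    ∑ i, ⟪w y, fderiv ℝ v y (stdOrthonormalBasis ℝ V i)⟫ * ⟪y - x, stdOrthonormalBasis ℝ V i⟫ =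
      ⟪w y, radialDeriv v x y⟫ := by
  rw [radialDeriv]
  conv_rhs => rw [← (stdOrthonormalBasis ℝ V).sum_repr' (y - x)]
  simp [inner_sum, inner_smul_right, real_inner_comm, mul_comm]

lemma radialDeriv_gradInner_self (hu : ContDiffAt ℝ 2 u y) :
    radialDeriv (gradInner u u) x y =
      2 * (gradInner (radialDeriv u x) u y - gradInner u u y) := by
  have hderiv : HasFDerivAt (gradInner u u) _ y := HasFDerivAt.fun_sum fun i _ =>
    (hasFDerivAt_fderiv_apply hu (stdOrthonormalBasis ℝ V i)).inner ℝ
      (hasFDerivAt_fderiv_apply hu (stdOrthonormalBasis ℝ V i))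
  rw [radialDeriv, hderiv.fderiv, gradInner, gradInner, ← Finset.sum_sub_distrib, Finset.mul_sum]
  simp [fderiv_radialDeriv_apply hu, inner_add_left, real_inner_comm, two_mul]

lemma contDiffOn_gradInner_self {s : Set V} (hs : IsOpen s) (hu : ContDiffOn ℝ 2 u s) :
    ContDiffOn ℝ 1 (gradInner u u) s :=
  ContDiffOn.sum fun i _ =>
    have hdu : ContDiffOn ℝ 1 (fun y => fderiv ℝ u y (stdOrthonormalBasis ℝ V i)) s :=
      (hu.fderiv_of_isOpen hs le_rfl).clm_apply contDiffOn_const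
    hdu.inner ℝ hdu

variable [MeasurableSpace V] [BorelSpace V] {μ : Measure V} [μ.IsAddHaarMeasure]

theorem radialIntegral_gradInner_add_inner_laplacian (hφ : IsRadialCutoff φ) (hr : 0 < r)
    (hrR : r < R) (hw : ContDiffOn ℝ 1 w (ball x R)) (hv : ContDiffOn ℝ 2 v (ball x R)) :
    radialIntegral μ φ (fun y => gradInner w v y + ⟪w y, Δ v y⟫) x r =
      r⁻¹ * shellIntegral μ φ (fun y => ⟪w y, radialDeriv v x y⟫) x r := by
  set b := stdOrthonormalBasis ℝ V with hb
  have hsub : closedBall x r ⊆ ball x R := closedBall_subset_ball hrR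
  have hflux (i) : ContDiffOn ℝ 1 (fun y => ⟪w y, fderiv ℝ v y (b i)⟫) (ball x R) :=
    hw.inner ℝ ((hv.fderiv_of_isOpen isOpen_ball le_rfl).clm_apply contDiffOn_const)
  calc radialIntegral μ φ (fun y => gradInner w v y + ⟪w y, Δ v y⟫) x r
    _ = radialIntegral μ φ
        (fun y => ∑ i, fderiv ℝ (fun y => ⟪w y, fderiv ℝ v y (b i)⟫) y (b i)) x r := by
      refine radialIntegral_congr hφ.isRadialWeight hr fun y hy => ?_
      have hy : ball x R ∈ 𝓝 y := isOpen_ball.mem_nhds (ball_subset_ball hrR.le hy)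
      exact (sum_fderiv_inner_fderiv ((hw.contDiffAt hy).differentiableAt one_ne_zero)
        (hv.contDiffAt hy)).symm
    _ = ∑ i, r⁻¹ * shellIntegral μ φ (fun y => ⟪w y, fderiv ℝ v y (b i)⟫ * ⟪y - x, b i⟫) x r := by
      rw [radialIntegral_sum _ hφ.isRadialWeight hr fun i _ =>
        (((hflux i).continuousOn_fderiv_of_isOpen isOpen_ball le_rfl).mono hsub).clm_apply
          continuousOn_const]
      exact Finset.sum_congr rfl fun i _ => radialIntegral_fderiv_apply hφ hr hrR (hflux i) (b i)
    _ = r⁻¹ * shellIntegral μ φ (fun y => ⟪w y, radialDeriv v x y⟫) x r := by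
      have hterm (i) : ContinuousOn (fun y => ⟪w y, fderiv ℝ v y (b i)⟫ * ⟪y - x, b i⟫)
          (closedBall x r) := ((hflux i).continuousOn.mono hsub).mul (by fun_prop)
      rw [← Finset.mul_sum, ← shellIntegral_sum _ hφ hr fun i _ => hterm i]
      simp only [hb, sum_inner_fderiv_mul_inner]

theorem radialIntegral_gradInner_of_harmonicOnNhd (hφ : IsRadialCutoff φ) (hr : 0 < r)
    (hrR : r < R) (hw : ContDiffOn ℝ 1 w (ball x R)) (hv : HarmonicOnNhd v (ball x R)) :
    radialIntegral μ φ (gradInner w v) x r =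
      r⁻¹ * shellIntegral μ φ (fun y => ⟪w y, radialDeriv v x y⟫) x r := by
  rw [← radialIntegral_gradInner_add_inner_laplacian hφ hr hrR hw hv.contDiffOn]
  refine radialIntegral_congr hφ.isRadialWeight hr fun y hy => ?_
  simp [(hv y (ball_subset_ball hrR.le hy)).2.eq_of_nhds]

end Green

section Frequency

variable {V F : Type*} [NormedAddCommGroup V] [InnerProductSpace ℝ V] [FiniteDimensional ℝ V]
  [MeasurableSpace V] [BorelSpace V] [NormedAddCommGroup F] [InnerProductSpace ℝ F]

/-- The smoothed Dirichlet energy `D_φ(x, r)`. -/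
def dirichletEnergy (φ : ℝ → ℝ) (u : V → F) : V → ℝ → ℝ :=
  radialIntegral volume φ (gradInner u u)

/-- The smoothed height `H_φ(x, r)`. -/
def height (φ : ℝ → ℝ) (u : V → F) : V → ℝ → ℝ :=
  shellIntegral volume φ fun y => ‖u y‖ ^ 2

/-- The smoothed frequency `N_φ(x, r) = r D_φ(x, r) / H_φ(x, r)`, which is `0` by convention where
the height vanishes. -/
def frequency (φ : ℝ → ℝ) (u : V → F) (x : V) (r : ℝ) : ℝ :=
  r * dirichletEnergy φ u x r / height φ u x r

variable {φ : ℝ → ℝ} {u : V → F} {x : V} {r R a b : ℝ}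

lemma dirichletEnergy_eq_shellIntegral (hφ : IsRadialCutoff φ) (hr : 0 < r) (hrR : r < R)
    (hu : HarmonicOnNhd u (ball x R)) :
    dirichletEnergy φ u x r =
      r⁻¹ * shellIntegral volume φ (fun y => ⟪u y, radialDeriv u x y⟫) x r :=
  radialIntegral_gradInner_of_harmonicOnNhd hφ hr hrR (hu.contDiffOn.of_le one_le_two) hu

lemma hasDerivAt_height (hφ : IsRadialCutoff φ) (hr : 0 < r) (hrR : r < R)
    (hu : HarmonicOnNhd u (ball x R)) :
    HasDerivAt (height φ u x)
      ((finrank ℝ V - 1) / r * height φ u x r + 2 * dirichletEnergy φ u x r) r := by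
  have hu1 : ContDiffOn ℝ 1 u (ball x R) := hu.contDiffOn.of_le one_le_two
  have hradial : shellIntegral volume φ (radialDeriv (fun y => ‖u y‖ ^ 2) x) x r =
      2 * shellIntegral volume φ (fun y => ⟪u y, radialDeriv u x y⟫) x r := by
    rw [← shellIntegral_const_mul]
    refine shellIntegral_congr hφ hr fun y hy => radialDeriv_norm_sq ?_
    exact (hu y (ball_subset_ball hrR.le hy)).1.differentiableAt two_ne_zero
  refine (hasDerivAt_shellIntegral hφ hr hrR (hu1.norm_sq ℝ)).congr_deriv ?_
  rw [hradial, dirichletEnergy_eq_shellIntegral hφ hr hrR hu, height]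
  ring

-- The Rellich–Pohozaev identity, i.e. Green's identity tested against the multiplier `∂_η u`.
lemma dirichletEnergy_add_radialIntegral_radialDeriv (hφ : IsRadialCutoff φ) (hr : 0 < r)
    (hrR : r < R) (hu : HarmonicOnNhd u (ball x R)) :
    2 * dirichletEnergy φ u x r +
      radialIntegral volume φ (radialDeriv (gradInner u u) x) x r =
        2 / r * shellIntegral volume φ (fun y => ‖radialDeriv u x y‖ ^ 2) x r := by
  have hsub : closedBall x r ⊆ ball x R := closedBall_subset_ball hrR
  have hw : ContDiffOn ℝ 1 (radialDeriv u x) (ball x R) :=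
    contDiffOn_radialDeriv isOpen_ball hu.contDiffOn
  have hG : ContDiffOn ℝ 1 (gradInner u u) (ball x R) :=
    contDiffOn_gradInner_self isOpen_ball hu.contDiffOn
  have hG' : ContinuousOn (radialDeriv (gradInner u u) x) (closedBall x r) :=
    ((hG.continuousOn_fderiv_of_isOpen isOpen_ball le_rfl).mono hsub).clm_apply (by fun_prop)
  have hgreen := radialIntegral_gradInner_of_harmonicOnNhd (μ := volume) hφ hr hrR hw hu
  simp only [real_inner_self_eq_norm_sq] at hgreen
  rw [div_eq_mul_inv, mul_assoc, ← hgreen, dirichletEnergy, ← radialIntegral_const_mul,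
    ← radialIntegral_const_mul, ← radialIntegral_add hφ.isRadialWeight hr
      ((hG.continuousOn.mono hsub).const_mul 2) hG']
  refine radialIntegral_congr hφ.isRadialWeight hr fun y hy => ?_
  simp only [radialDeriv_gradInner_self (hu y (ball_subset_ball hrR.le hy)).1]
  ring

lemma hasDerivAt_dirichletEnergy (hφ : IsRadialCutoff φ) (hr : 0 < r) (hrR : r < R)
    (hu : HarmonicOnNhd u (ball x R)) :
    HasDerivAt (dirichletEnergy φ u x)
      ((finrank ℝ V - 2) / r * dirichletEnergy φ u x r +
        2 / r ^ 2 * shellIntegral volume φ (fun y => ‖radialDeriv u x y‖ ^ 2) x r) r := by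
  have hG : ContDiffOn ℝ 1 (gradInner u u) (ball x R) :=
    contDiffOn_gradInner_self isOpen_ball hu.contDiffOn
  have hrellich := dirichletEnergy_add_radialIntegral_radialDeriv hφ hr hrR hu
  refine (hasDerivAt_radialIntegral hφ.isRadialWeight hr hrR hG).congr_deriv ?_
  rw [← eq_sub_iff_add_eq'] at hrellich
  rw [hrellich, dirichletEnergy]
  field_simp
  ring

lemma shellIntegral_norm_sub_smul_sq {μ : Measure V} [IsFiniteMeasureOnCompacts μ] {v w : V → F}
    (hφ : IsRadialCutoff φ) (hr : 0 < r) (hv : ContinuousOn v (closedBall x r))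
    (hw : ContinuousOn w (closedBall x r)) (c : ℝ) :
    shellIntegral μ φ (fun y => ‖w y - c • v y‖ ^ 2) x r =
      shellIntegral μ φ (fun y => ‖w y‖ ^ 2) x r +
        (-(2 * c) * shellIntegral μ φ (fun y => ⟪v y, w y⟫) x r +
          c ^ 2 * shellIntegral μ φ (fun y => ‖v y‖ ^ 2) x r) := by
  rw [← shellIntegral_const_mul, ← shellIntegral_const_mul,
    ← shellIntegral_add hφ hr (by fun_prop) (by fun_prop),
    ← shellIntegral_add hφ hr (by fun_prop) (by fun_prop)]
  congr 1 with y
  rw [norm_sub_sq_real, inner_smul_right, norm_smul, mul_pow, Real.norm_eq_abs, sq_abs,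
    real_inner_comm]
  ring

theorem hasDerivAt_frequency (hφ : IsRadialCutoff φ) (hr : 0 < r) (hrR : r < R)
    (hu : HarmonicOnNhd u (ball x R)) (hH : height φ u x r ≠ 0) :
    HasDerivAt (frequency φ u x)
      (2 / (r * height φ u x r) * shellIntegral volume φ
        (fun y => ‖radialDeriv u x y - frequency φ u x r • u y‖ ^ 2) x r) r := by
  have hsub : closedBall x r ⊆ ball x R := closedBall_subset_ball hrR
  have hflux : shellIntegral volume φ (fun y => ⟪u y, radialDeriv u x y⟫) x r =
      r * dirichletEnergy φ u x r := by
    rw [dirichletEnergy_eq_shellIntegral hφ hr hrR hu, mul_inv_cancel_left₀ hr.ne']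
  have hheight : shellIntegral volume φ (fun y => ‖u y‖ ^ 2) x r = height φ u x r := rfl
  have hquot := ((hasDerivAt_id r).mul (hasDerivAt_dirichletEnergy hφ hr hrR hu)).div
    (hasDerivAt_height hφ hr hrR hu) hH
  refine hquot.congr_deriv ?_
  rw [shellIntegral_norm_sub_smul_sq hφ hr (hu.contDiffOn.continuousOn.mono hsub)
    ((contDiffOn_radialDeriv isOpen_ball hu.contDiffOn).continuousOn.mono hsub), hflux,
    hheight, frequency]
  simp only [id, Pi.mul_apply]
  field_simp
  ring

theorem stmt_12_general (hφ : IsRadialCutoff φ) (hφ_anti : Antitone φ) (ha : 0 ≤ a)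
    (hu : HarmonicOnNhd u (ball x b)) (hH : ∀ t ∈ Set.Ioo a b, 0 < height φ u x t) :
    (∀ r ∈ Set.Ioo a b,
      HasDerivAt (frequency φ u x)
        (2 / (r * height φ u x r) * shellIntegral volume φ
          (fun y => ‖radialDeriv u x y - frequency φ u x r • u y‖ ^ 2) x r) r ∧
      0 ≤ 2 / (r * height φ u x r) * shellIntegral volume φ
          (fun y => ‖radialDeriv u x y - frequency φ u x r • u y‖ ^ 2) x r) ∧
    MonotoneOn (frequency φ u x) (Set.Ioo a b) := by
  refine (and_iff_left_of_imp fun hderiv => ?_).2 fun r hr => ⟨?_, ?_⟩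
  · refine monotoneOn_of_deriv_nonneg (convex_Ioo a b)
      (HasDerivAt.continuousOn fun r hr => (hderiv r hr).1) ?_ ?_ <;> rw [interior_Ioo]
    · exact fun r hr => (hderiv r hr).1.differentiableAt.differentiableWithinAt
    · exact fun r hr => (hderiv r hr).2.trans_eq (hderiv r hr).1.deriv.symm
  · exact hasDerivAt_frequency hφ (ha.trans_lt hr.1) hr.2 hu (hH r hr).ne'
  · exact mul_nonneg (div_nonneg zero_le_two (mul_pos (ha.trans_lt hr.1) (hH r hr)).le)
      (shellIntegral_nonneg hφ_anti fun y => sq_nonneg _)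

end Frequency

section EuclideanFour

variable {F : Type*} [NormedAddCommGroup F] [InnerProductSpace ℝ F] {u : E4 → F} {Ω : Set E4}

lemma gradSq_eq_gradInner (u : E4 → F) : gradSq u = gradInner u u := by
  ext y
  rw [gradInner_eq_sum_orthonormalBasis (EuclideanSpace.basisFun (Fin 4) ℝ), gradSq]
  simp only [EuclideanSpace.basisFun_apply, real_inner_self_eq_norm_sq]

lemma Nphi_eq_frequency (φ : ℝ → ℝ) (u : E4 → F) : Nphi φ u = frequency φ u := by
  ext x r
  rw [Nphi, Dphi, gradSq_eq_gradInner]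
  rfl

lemma IsHarmonicOn.harmonicOnNhd (hu : IsHarmonicOn u Ω) (hΩ : IsOpen Ω) :
    HarmonicOnNhd u Ω := by
  have hΔ : Set.EqOn (Δ u) 0 Ω := fun y hy => by
    rw [laplacian_eq_iteratedFDeriv_orthonormalBasis u (EuclideanSpace.basisFun (Fin 4) ℝ)]
    simpa only [EuclideanSpace.basisFun_apply, Pi.zero_apply] using hu.2 y hy
  intro y hy
  exact ⟨(hu.1.contDiffAt (hΩ.mem_nhds hy)).of_le (WithTop.coe_le_coe.2 le_top),
    hΔ.eventuallyEq_of_mem (hΩ.mem_nhds hy)⟩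

lemma isRadialCutoff_of_eq_one {φ : ℝ → ℝ} {c : ℝ} (hφs : ContDiff ℝ 1 φ)
    (hc : 0 < c) (hφ1 : ∀ t ≤ c, φ t = 1) (hφ0 : ∀ t, 1 ≤ t → φ t = 0) : IsRadialCutoff φ where
  contDiff := hφs
  eventually_eq := by
    filter_upwards [ge_mem_nhds hc] with t ht
    rw [hφ1 t ht, hφ1 0 hc.le]
  eq_zero_of_one_le := hφ0

end EuclideanFour

/-- Flat-case monotonicity of the smoothed frequency (Corollary 4.5, radial derivative):
`∂_r N_φ(x,r) = (2/(r H_φ(x,r))) ∫ −φ'(|y−x|/r) |y−x|⁻¹ |∂_{η_x}u − N_φ(x,r) u|² dy ≥ 0`,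
so `N_φ(x,·)` is nondecreasing on `(a,b)`. -/
theorem stmt_12 (φ : ℝ → ℝ) (hφs : ContDiff ℝ (⊤ : ℕ∞) φ) (hφa : Antitone φ)
    (hφ1 : ∀ t ≤ (3/4 : ℝ), φ t = 1) (hφ0 : ∀ t, (1:ℝ) ≤ t → φ t = 0)
    (Ω : Set E4) (hΩ : IsOpen Ω) (u : E4 → E) (hu : IsHarmonicOn u Ω)
    (x : E4) (a b : ℝ) (ha : 0 < a) (hab : a < b)
    (hball : closedBall x b ⊆ Ω)
    (hH : ∀ t ∈ Set.Ioo a b, 0 < Hphi φ u x t) :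
    (∀ r ∈ Set.Ioo a b,
      HasDerivAt (fun t => Nphi φ u x t)
        ((2 / (r * Hphi φ u x r)) *
          ∫ y, -(deriv φ (‖y - x‖ / r)) * ‖y - x‖⁻¹ *
            ‖fderiv ℝ u y (y - x) - Nphi φ u x r • u y‖ ^ 2) r ∧
      0 ≤ (2 / (r * Hphi φ u x r)) *
          ∫ y, -(deriv φ (‖y - x‖ / r)) * ‖y - x‖⁻¹ *
            ‖fderiv ℝ u y (y - x) - Nphi φ u x r • u y‖ ^ 2) ∧
    MonotoneOn (fun t => Nphi φ u x t) (Set.Ioo a b) := by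
  have hφ : IsRadialCutoff φ :=
    isRadialCutoff_of_eq_one (hφs.of_le (mod_cast le_top)) (by norm_num) hφ1 hφ0
  have hu' : HarmonicOnNhd u (ball x b) :=
    (hu.harmonicOnNhd hΩ).mono (ball_subset_closedBall.trans hball)
  simp only [Nphi_eq_frequency, ← shellIntegral_eq_integral_neg]
  exact stmt_12_general hφ hφa ha.le hu' hH
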